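/- Let ρ ∈ (0,1), θ > 0, λ ∈ ℝ with λ ≠ 0, let ν be a Γ-grey noise measure on S' with parameters ρ, θ, and let φ ∈ S satisfy λ²‖φ‖² < 2θ. Then the function ω ↦ e^{|λ⟨ω,φ⟩|} is ν-integrable on S', and ∫_{S'} e^{λ⟨ω,φ⟩} dν(ω) = Γ(ρ, θ - (λ²/2)‖φ‖²)/Γ(ρ,θ). -/

import Mathlib

open MeasureTheory Real Set SchwartzMap

/-- Upper incomplete gamma function `Γ(ρ, x) = ∫_x^∞ e^{-w} w^{ρ-1} dw`. -/
noncomputable def uGamma (ρ x : ℝ) : ℝ := ∫ w in Set.Ioi x, Real.exp (-w) * w ^ (ρ - 1)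

/-- The space `S'`: the topological dual of the Schwartz space `S(ℝ)`,
equipped with the weak-* topology. -/
abbrev SchwartzDual := WeakDual ℝ (SchwartzMap ℝ ℝ)

/-- Borel σ-algebra on `S'` (Borel σ-algebra of the weak-* topology). -/
noncomputable instance : MeasurableSpace SchwartzDual := borel _

instance : BorelSpace SchwartzDual := ⟨rfl⟩

/-!
For `ρ ≤ 1` the function `Γ(ρ, ·)` is the Laplace transform of a measure `M` on `[0, ∞)`:
`w ^ (ρ - 1)` is one (of the Dirac mass at `0` if `ρ = 1`), multiplying a transform by `e^{-w}`
shifts the measure by `1`, and integrating it over `(x, ∞)` multiplies the measure by `1 / v`.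
Tilting `M` by `e^{-θv}` and normalising gives a law `m` on `[0, ∞)` with
`∫ e^{cv} dm(v) = Γ(ρ, θ - c) / Γ(ρ, θ)` for every `c < θ`. Taking `c = -t²‖φ‖²/2` shows that
`⟨ω, φ⟩` has the characteristic function of a centred Gaussian with random variance `‖φ‖² V`,
`V ∼ m`, so this is its law; its moment generating function at `λ` is then the same formula with
`c = λ²‖φ‖²/2`.
-/

open ProbabilityTheory
open scoped NNReal ENNReal

/-- `HasLaplaceTransform M F`: the measure `M` on `[0, ∞)` has Laplace transform `F` on `(0, ∞)`,
i.e. `∫ e^{-xv} dM(v) = F x` for `x > 0`, the integral being convergent. The transform is written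
as the moment generating function at `-x`. -/
structure HasLaplaceTransform (M : Measure ℝ≥0) (F : ℝ → ℝ) : Prop where
  integrable_exp : ∀ {x : ℝ}, 0 < x → Integrable (fun v : ℝ≥0 ↦ exp (-x * v)) M
  mgf_neg : ∀ {x : ℝ}, 0 < x → mgf ((↑) : ℝ≥0 → ℝ) M (-x) = F x

namespace HasLaplaceTransform

variable {M : Measure ℝ≥0} {F : ℝ → ℝ} {x : ℝ}

lemma nonneg (h : HasLaplaceTransform M F) (hx : 0 < x) : 0 ≤ F x :=
  h.mgf_neg hx ▸ mgf_nonneg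

lemma lintegral_exp (h : HasLaplaceTransform M F) (hx : 0 < x) :
    ∫⁻ v, ENNReal.ofReal (exp (-x * v)) ∂M = ENNReal.ofReal (F x) := by
  rw [← h.mgf_neg hx, mgf, ofReal_integral_eq_lintegral_ofReal (h.integrable_exp hx)
    (ae_of_all _ fun _ ↦ (exp_pos _).le)]

lemma of_lintegral_exp (hF : ∀ x, 0 < x → 0 ≤ F x)
    (h : ∀ x, 0 < x → ∫⁻ v, ENNReal.ofReal (exp (-x * v)) ∂M = ENNReal.ofReal (F x)) :
    HasLaplaceTransform M F where
  integrable_exp {x} hx := by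
    refine (lintegral_ofReal_ne_top_iff_integrable (by fun_prop)
      (ae_of_all _ fun _ ↦ (exp_pos _).le)).1 ?_
    rw [h x hx]
    exact ENNReal.ofReal_ne_top
  mgf_neg {x} hx := by
    rw [mgf, integral_eq_lintegral_of_nonneg_ae (ae_of_all _ fun _ ↦ (exp_pos _).le)
      (by fun_prop), h x hx, ENNReal.toReal_ofReal (hF x hx)]

lemma dirac_zero : HasLaplaceTransform (Measure.dirac 0) fun _ ↦ 1 where
  integrable_exp _ := integrable_dirac (by simp)
  mgf_neg _ := by simp [mgf_dirac']

lemma map_const_add (h : HasLaplaceTransform M F) (c : ℝ≥0) :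
    HasLaplaceTransform (M.map (c + ·)) fun x ↦ exp (-x * c) * F x where
  integrable_exp {x} hx := by
    rw [integrable_map_measure (by fun_prop) (by fun_prop)]
    refine ((h.integrable_exp hx).const_mul (exp (-x * c))).congr (ae_of_all _ fun v ↦ ?_)
    simp only [Function.comp_apply, NNReal.coe_add, mul_add, exp_add]
  mgf_neg {x} hx := by
    rw [mgf_map (by fun_prop) (by fun_prop), ← h.mgf_neg hx, ← mgf_const_add]
    rfl

lemma withDensity_inv [SFinite M] (h : HasLaplaceTransform M F) (hM : ∀ᵐ v ∂M, 0 < v)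
    (hF : ∀ x, 0 < x → IntegrableOn F (Ioi x)) :
    HasLaplaceTransform (M.withDensity fun v ↦ ((v⁻¹ : ℝ≥0) : ℝ≥0∞)) fun x ↦ ∫ w in Ioi x, F w := by
  refine of_lintegral_exp
    (fun x hx ↦ setIntegral_nonneg measurableSet_Ioi fun w hw ↦ h.nonneg (hx.trans hw))
    fun x hx ↦ ?_
  have inner_integral : ∀ᵐ v : ℝ≥0 ∂M, ((v⁻¹ : ℝ≥0) : ℝ≥0∞) * ENNReal.ofReal (exp (-x * v)) =
      ∫⁻ w in Ioi x, ENNReal.ofReal (exp (-w * v)) := by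
    filter_upwards [hM] with v hv
    have hv' : -(v : ℝ) < 0 := neg_lt_zero.2 (NNReal.coe_pos.2 hv)
    simp_rw [neg_mul_comm _ (v : ℝ), mul_comm _ (-(v : ℝ))]
    rw [← ofReal_integral_eq_lintegral_ofReal (integrableOn_exp_mul_Ioi hv' x)
      (ae_of_all _ fun _ ↦ (exp_pos _).le), integral_exp_mul_Ioi hv', neg_div_neg_eq,
      div_eq_inv_mul, ENNReal.ofReal_mul (by positivity), ← NNReal.coe_inv,
      ENNReal.ofReal_coe_nnreal]
  calc ∫⁻ v, ENNReal.ofReal (exp (-x * v)) ∂M.withDensity (fun v ↦ ((v⁻¹ : ℝ≥0) : ℝ≥0∞))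
      = ∫⁻ v, (∫⁻ w in Ioi x, ENNReal.ofReal (exp (-w * v))) ∂M := by
        rw [lintegral_withDensity_eq_lintegral_mul _ (by fun_prop) (by fun_prop)]
        exact lintegral_congr_ae inner_integral
    _ = ∫⁻ w in Ioi x, ∫⁻ v, ENNReal.ofReal (exp (-w * v)) ∂M :=
        lintegral_lintegral_swap (by unfold Function.uncurry; fun_prop)
    _ = ∫⁻ w in Ioi x, ENNReal.ofReal (F w) :=
        setLIntegral_congr_fun measurableSet_Ioi fun w hw ↦ h.lintegral_exp (hx.trans hw)
    _ = ENNReal.ofReal (∫ w in Ioi x, F w) :=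
        (ofReal_integral_eq_lintegral_ofReal (hF x hx) <| (ae_restrict_mem measurableSet_Ioi).mono
          fun w hw ↦ h.nonneg (hx.trans hw)).symm

end HasLaplaceTransform

/-- The measure `v ^ (a - 1) / Γ(a) dv` on `(0, ∞)`, for `a > 0`; its Laplace transform is
`x ^ (-a)`. -/
noncomputable def rpowMeasure (a : ℝ) : Measure ℝ≥0 :=
  ((volume.restrict (Ioi (0 : ℝ))).withDensity
    fun v ↦ ENNReal.ofReal (v ^ (a - 1) / Gamma a)).map toNNReal

lemma lintegral_rpow_div_Gamma_mul_exp {a x : ℝ} (ha : 0 < a) (hx : 0 < x) :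
    ∫⁻ v in Ioi (0 : ℝ), ENNReal.ofReal (v ^ (a - 1) / Gamma a * exp (-x * v)) =
      ENNReal.ofReal (x ^ (-a)) := by
  have hΓ := Gamma_pos_of_pos ha
  have hval : ∫ v in Ioi (0 : ℝ), v ^ (a - 1) / Gamma a * exp (-x * v) = x ^ (-a) := by
    simp_rw [div_mul_eq_mul_div, integral_div, neg_mul,
      integral_rpow_mul_exp_neg_mul_Ioi ha hx, mul_div_cancel_right₀ _ hΓ.ne', one_div,
      inv_rpow hx.le, rpow_neg hx.le]
  rw [← hval, ofReal_integral_eq_lintegral_ofReal]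
  · exact .of_integral_ne_zero (by rw [hval]; positivity)
  · filter_upwards [ae_restrict_mem measurableSet_Ioi] with v (hv : 0 < v)
    simp only [Pi.zero_apply]
    positivity

lemma hasLaplaceTransform_rpowMeasure {a : ℝ} (ha : 0 < a) :
    HasLaplaceTransform (rpowMeasure a) (· ^ (-a)) := by
  refine .of_lintegral_exp (fun x hx ↦ rpow_nonneg hx.le _) fun x hx ↦ ?_
  rw [rpowMeasure, lintegral_map (by fun_prop) (by fun_prop),
    lintegral_withDensity_eq_lintegral_mul _ (by fun_prop) (by fun_prop),
    ← lintegral_rpow_div_Gamma_mul_exp ha hx]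
  refine setLIntegral_congr_fun measurableSet_Ioi fun v (hv : 0 < v) ↦ ?_
  rw [Pi.mul_apply, coe_toNNReal _ hv.le, ENNReal.ofReal_mul (by positivity)]

lemma exists_hasLaplaceTransform_rpow_neg {a : ℝ} (ha : 0 ≤ a) :
    ∃ M : Measure ℝ≥0, SFinite M ∧ HasLaplaceTransform M (· ^ (-a)) := by
  obtain rfl | ha := ha.eq_or_lt
  · exact ⟨_, inferInstance, by simpa using HasLaplaceTransform.dirac_zero⟩
  · exact ⟨_, by unfold rpowMeasure; infer_instance, hasLaplaceTransform_rpowMeasure ha⟩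

lemma integrableOn_exp_neg_mul_rpow_Ioi (a : ℝ) {x : ℝ} (hx : 0 < x) :
    IntegrableOn (fun w ↦ exp (-w) * w ^ a) (Ioi x) :=
  integrable_of_isBigO_exp_neg one_half_pos
    (continuousOn_id.neg.rexp.mul
      (continuousOn_id.rpow_const fun _ hw ↦ .inl (hx.trans_le hw).ne'))
    (Gamma_integrand_isLittleO a).isBigO

lemma exists_hasLaplaceTransform_uGamma {ρ : ℝ} (hρ : ρ ≤ 1) :
    ∃ M : Measure ℝ≥0, HasLaplaceTransform M (uGamma ρ) := by
  obtain ⟨M, _, hM⟩ := exists_hasLaplaceTransform_rpow_neg (sub_nonneg.2 hρ)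
  have hshift : HasLaplaceTransform (M.map (1 + ·)) fun w ↦ exp (-w) * w ^ (ρ - 1) := by
    simpa using hM.map_const_add 1
  have hpos : ∀ᵐ v ∂M.map (1 + ·), 0 < v :=
    (ae_map_iff (by fun_prop) measurableSet_Ioi).2 (ae_of_all _ fun v ↦ by positivity)
  exact ⟨_, hshift.withDensity_inv hpos fun x hx ↦ integrableOn_exp_neg_mul_rpow_Ioi _ hx⟩

section Tilting

variable {Ω : Type*} {mΩ : MeasurableSpace Ω} {μ : Measure Ω} {X : Ω → ℝ} {a c : ℝ}

lemma mgf_tilted_mul : mgf X (μ.tilted (a * X ·)) c = mgf X μ (a + c) / mgf X μ a := by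
  rw [mgf, integral_tilted_mul_eq_mgf, mgf.eq_1 X μ (a + c), ← integral_div]
  congr with ω
  rw [smul_eq_mul, add_mul, exp_add, div_mul_eq_mul_div]

lemma integrable_exp_mul_tilted_mul (ha : Integrable (fun ω ↦ exp (a * X ω)) μ)
    (hac : Integrable (fun ω ↦ exp ((a + c) * X ω)) μ) :
    Integrable (fun ω ↦ exp (c * X ω)) (μ.tilted (a * X ·)) := by
  rw [integrable_tilted_iff ha]
  simpa only [smul_eq_mul, ← exp_add, ← add_mul] using hac

end Tilting

lemma integral_measure_comp {α β E : Type*} {mα : MeasurableSpace α} {mβ : MeasurableSpace β}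
    [NormedAddCommGroup E] [NormedSpace ℝ E] {κ : Kernel α β} {μ : Measure α} {f : β → E}
    (hf : Integrable f (κ ∘ₘ μ)) : ∫ y, f y ∂(κ ∘ₘ μ) = ∫ x, ∫ y, f y ∂κ x ∂μ := by
  rw [Measure.comp_eq_comp_const_apply] at hf ⊢
  rw [Kernel.integral_comp hf, Kernel.const_apply]

section GaussianVarianceMixture

/-- The stochastic kernel `v ↦ N(0, s v)`. Composing it with a law `m` of `V` on `[0, ∞)` gives the
Gaussian variance mixture, i.e. the law of `√(s V) Z` with `Z` standard normal independent of
`V`. -/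
noncomputable def gaussianVarianceKernel (s : ℝ≥0) : Kernel ℝ≥0 ℝ where
  toFun v := gaussianReal 0 (s * v)
  measurable' := measurable_gaussianReal.comp (by fun_prop : Measurable fun v ↦ ((0 : ℝ), s * v))

lemma gaussianVarianceKernel_apply (s v : ℝ≥0) :
    gaussianVarianceKernel s v = gaussianReal 0 (s * v) := rfl

instance (s : ℝ≥0) : IsMarkovKernel (gaussianVarianceKernel s) :=
  ⟨fun v ↦ by rw [gaussianVarianceKernel_apply]; infer_instance⟩

variable {s : ℝ≥0} {m : Measure ℝ≥0}

lemma integral_exp_gaussianVarianceKernel (s v : ℝ≥0) (t : ℝ) :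
    ∫ y, exp (t * y) ∂gaussianVarianceKernel s v = exp (s * t ^ 2 / 2 * v) := by
  have h := congrFun (mgf_id_gaussianReal (μ := 0) (v := s * v)) t
  simp only [mgf, id] at h
  rw [gaussianVarianceKernel_apply, h]
  push_cast
  ring_nf

lemma charFun_gaussianVarianceKernel (s v : ℝ≥0) (t : ℝ) :
    charFun (gaussianVarianceKernel s v) t = (exp (-(s * t ^ 2 / 2) * v) : ℝ) := by
  rw [gaussianVarianceKernel_apply, charFun_gaussianReal]
  push_cast
  ring_nf

lemma charFun_gaussianVarianceKernel_comp [IsFiniteMeasure m] (t : ℝ) :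
    charFun (gaussianVarianceKernel s ∘ₘ m) t = (mgf (↑) m (-(s * t ^ 2 / 2)) : ℝ) := by
  have hint : Integrable (fun y : ℝ ↦ Complex.exp (t * y * Complex.I))
      (gaussianVarianceKernel s ∘ₘ m) :=
    .of_bound (by fun_prop) 1 <| ae_of_all _ fun y ↦ by
      rw [← Complex.ofReal_mul, Complex.norm_exp_ofReal_mul_I]
  rw [charFun_apply_real, integral_measure_comp hint, mgf, ← integral_complex_ofReal]
  simp_rw [← charFun_apply_real, charFun_gaussianVarianceKernel]

lemma integrable_exp_mul_gaussianVarianceKernel_comp {t : ℝ}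
    (h : Integrable (fun v : ℝ≥0 ↦ exp (s * t ^ 2 / 2 * v)) m) :
    Integrable (fun y ↦ exp (t * y)) (gaussianVarianceKernel s ∘ₘ m) := by
  rw [Measure.integrable_comp_iff (by fun_prop)]
  refine ⟨ae_of_all _ fun v ↦ integrable_exp_mul_gaussianReal t, ?_⟩
  simpa only [norm_eq_abs, abs_exp, integral_exp_gaussianVarianceKernel] using h

lemma mgf_gaussianVarianceKernel_comp {t : ℝ}
    (h : Integrable (fun v : ℝ≥0 ↦ exp (s * t ^ 2 / 2 * v)) m) :
    mgf id (gaussianVarianceKernel s ∘ₘ m) t = mgf (↑) m (s * t ^ 2 / 2) := by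
  simp only [mgf, id]
  rw [integral_measure_comp (integrable_exp_mul_gaussianVarianceKernel_comp h)]
  simp_rw [integral_exp_gaussianVarianceKernel]

end GaussianVarianceMixture

section CharFun

variable {M : Measure ℝ≥0} {F : ℝ → ℝ} {θ : ℝ} {s : ℝ≥0} {Ω : Type*} {mΩ : MeasurableSpace Ω}
  {P : Measure Ω} [IsProbabilityMeasure P] {X : Ω → ℝ}

lemma ne_zero_of_charFun_map_eq_div (hX : AEMeasurable X P)
    (hchar : ∀ t, charFun (P.map X) t = (F (θ + s * t ^ 2 / 2) / F θ : ℝ)) : F θ ≠ 0 := by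
  have := Measure.isProbabilityMeasure_map hX
  intro hF
  simpa [hF] using hchar 0

namespace HasLaplaceTransform

lemma isProbabilityMeasure_tilted (h : HasLaplaceTransform M F) (hθ : 0 < θ) (hF : F θ ≠ 0) :
    IsProbabilityMeasure (M.tilted fun v ↦ -θ * v) := by
  have : NeZero M := ⟨by rintro rfl; exact hF (by simpa using (h.mgf_neg hθ).symm)⟩
  exact MeasureTheory.isProbabilityMeasure_tilted (h.integrable_exp hθ)

lemma integrable_exp_mul_tilted (h : HasLaplaceTransform M F) (hθ : 0 < θ) {c : ℝ} (hc : c < θ) :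
    Integrable (fun v : ℝ≥0 ↦ exp (c * v)) (M.tilted fun v ↦ -θ * v) :=
  integrable_exp_mul_tilted_mul (h.integrable_exp hθ)
    (by simpa only [neg_sub, neg_add_eq_sub] using h.integrable_exp (sub_pos.2 hc))

lemma mgf_tilted (h : HasLaplaceTransform M F) (hθ : 0 < θ) {c : ℝ} (hc : c < θ) :
    mgf (↑) (M.tilted fun v ↦ -θ * v) c = F (θ - c) / F θ := by
  rw [mgf_tilted_mul, ← h.mgf_neg hθ, ← h.mgf_neg (sub_pos.2 hc), neg_sub, neg_add_eq_sub]

lemma map_eq_gaussianVarianceKernel_comp (h : HasLaplaceTransform M F) (hθ : 0 < θ)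
    (hX : AEMeasurable X P)
    (hchar : ∀ t, charFun (P.map X) t = (F (θ + s * t ^ 2 / 2) / F θ : ℝ)) :
    P.map X = gaussianVarianceKernel s ∘ₘ M.tilted fun v ↦ -θ * v := by
  have := Measure.isProbabilityMeasure_map hX
  have := h.isProbabilityMeasure_tilted hθ (ne_zero_of_charFun_map_eq_div hX hchar)
  refine Measure.ext_of_charFun (funext fun t ↦ ?_)
  have hneg : -(s * t ^ 2 / 2) < θ := (neg_nonpos.2 (by positivity)).trans_lt hθ
  rw [hchar, charFun_gaussianVarianceKernel_comp, h.mgf_tilted hθ hneg, sub_neg_eq_add]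

theorem integrable_exp_mul_of_charFun_eq (h : HasLaplaceTransform M F) (hX : AEMeasurable X P)
    (hchar : ∀ t, charFun (P.map X) t = (F (θ + s * t ^ 2 / 2) / F θ : ℝ)) {t : ℝ}
    (ht : s * t ^ 2 / 2 < θ) : Integrable (fun ω ↦ exp (t * X ω)) P := by
  have hθ : 0 < θ := ht.trans_le' (by positivity)
  have hmap : Integrable (fun y ↦ exp (t * y)) (P.map X) := by
    rw [h.map_eq_gaussianVarianceKernel_comp hθ hX hchar]
    exact integrable_exp_mul_gaussianVarianceKernel_comp (h.integrable_exp_mul_tilted hθ ht)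
  exact hmap.comp_aemeasurable hX

theorem mgf_of_charFun_eq (h : HasLaplaceTransform M F) (hX : AEMeasurable X P)
    (hchar : ∀ t, charFun (P.map X) t = (F (θ + s * t ^ 2 / 2) / F θ : ℝ)) {t : ℝ}
    (ht : s * t ^ 2 / 2 < θ) : mgf X P t = F (θ - s * t ^ 2 / 2) / F θ := by
  have hθ : 0 < θ := ht.trans_le' (by positivity)
  rw [← mgf_id_map hX, h.map_eq_gaussianVarianceKernel_comp hθ hX hchar,
    mgf_gaussianVarianceKernel_comp (h.integrable_exp_mul_tilted hθ ht), h.mgf_tilted hθ ht]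

end HasLaplaceTransform

end CharFun

section WeakDual

variable {E : Type*} [AddCommGroup E] [Module ℝ E] [TopologicalSpace E]
  [MeasurableSpace (WeakDual ℝ E)] [OpensMeasurableSpace (WeakDual ℝ E)]

lemma measurable_weakDual_eval (φ : E) : Measurable fun ω : WeakDual ℝ E ↦ ω φ :=
  (WeakDual.eval_continuous φ).measurable

lemma charFun_map_weakDual_eval (ν : Measure (WeakDual ℝ E)) (φ : E) (t : ℝ) :
    charFun (ν.map fun ω ↦ ω φ) t = ∫ ω, Complex.exp (Complex.I * ((ω (t • φ) : ℝ) : ℂ)) ∂ν := by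
  rw [charFun_apply_real, integral_map (measurable_weakDual_eval φ).aemeasurable (by fun_prop)]
  congr with ω
  rw [map_smul, smul_eq_mul, Complex.ofReal_mul, mul_comm Complex.I]

theorem stmt_9_general (ρ θ lam : ℝ) (hρ : ρ ≤ 1) {q : E → ℝ} (hq_nonneg : ∀ ξ, 0 ≤ q ξ)
    (hq_smul : ∀ (t : ℝ) ξ, q (t • ξ) = t ^ 2 * q ξ)
    (ν : Measure (WeakDual ℝ E)) [IsProbabilityMeasure ν]
    (hchar : ∀ ξ, ∫ ω, Complex.exp (Complex.I * ((ω ξ : ℝ) : ℂ)) ∂ν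
      = ((uGamma ρ (θ + q ξ / 2) / uGamma ρ θ : ℝ) : ℂ))
    (φ : E) (hφ : lam ^ 2 * q φ < 2 * θ) :
    Integrable (fun ω : WeakDual ℝ E ↦ exp |lam * ω φ|) ν ∧
    ∫ ω, exp (lam * ω φ) ∂ν = uGamma ρ (θ - lam ^ 2 / 2 * q φ) / uGamma ρ θ := by
  obtain ⟨M, hM⟩ := exists_hasLaplaceTransform_uGamma hρ
  obtain ⟨s, hs⟩ : ∃ s : ℝ≥0, (s : ℝ) = q φ := ⟨⟨_, hq_nonneg φ⟩, rfl⟩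
  have hlaw (t : ℝ) : charFun (ν.map fun ω ↦ ω φ) t =
      (uGamma ρ (θ + s * t ^ 2 / 2) / uGamma ρ θ : ℝ) := by
    rw [charFun_map_weakDual_eval, hchar, hq_smul, hs, mul_comm (q φ)]
  have hmeas := (measurable_weakDual_eval φ).aemeasurable (μ := ν)
  have hlam : s * lam ^ 2 / 2 < θ := by rw [hs]; linarith
  constructor
  · simp_rw [abs_mul]
    exact integrable_exp_abs_mul_abs (hM.integrable_exp_mul_of_charFun_eq hmeas hlaw hlam)
      (hM.integrable_exp_mul_of_charFun_eq hmeas hlaw (by rwa [neg_sq]))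
  · rw [← hs, show lam ^ 2 / 2 * (s : ℝ) = s * lam ^ 2 / 2 by ring]
    exact hM.mgf_of_charFun_eq hmeas hlaw hlam

end WeakDual

lemma integral_smul_mul_smul_self {α : Type*} [MeasurableSpace α] (μ : Measure α) (t : ℝ)
    (f : α → ℝ) :
    ∫ x, (t • f) x * (t • f) x ∂μ = t ^ 2 * ∫ x, f x * f x ∂μ := by
  rw [← integral_const_mul]
  congr with x
  rw [Pi.smul_apply, smul_eq_mul]
  ring

theorem stmt_9 (ρ θ lam : ℝ) (hρ : ρ ∈ Set.Ioo (0 : ℝ) 1) (hθ : 0 < θ) (hlam : lam ≠ 0)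
    (ν : Measure SchwartzDual) [IsProbabilityMeasure ν]
    (hchar : ∀ ξ : SchwartzMap ℝ ℝ,
        ∫ ω, Complex.exp (Complex.I * ((ω ξ : ℝ) : ℂ)) ∂ν
          = ((uGamma ρ (θ + (∫ x, ξ x * ξ x) / 2) / uGamma ρ θ : ℝ) : ℂ))
    (φ : SchwartzMap ℝ ℝ) (hφ : lam ^ 2 * ∫ x, φ x * φ x < 2 * θ) :
    Integrable (fun ω : SchwartzDual => Real.exp |lam * ω φ|) ν ∧
    ∫ ω, Real.exp (lam * ω φ) ∂ν
      = uGamma ρ (θ - lam ^ 2 / 2 * ∫ x, φ x * φ x) / uGamma ρ θ :=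
  stmt_9_general ρ θ lam hρ.2.le (q := fun ξ : SchwartzMap ℝ ℝ ↦ ∫ x, ξ x * ξ x)
    (fun ξ ↦ integral_nonneg fun x ↦ mul_self_nonneg (ξ x))
    (fun t ξ ↦ integral_smul_mul_smul_self volume t ξ) ν hchar φ hφ
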